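/- Let d ≥ 3 and let C be a positive semidefinite matrix on ℂ²⊗ℂ^d with eigenvalues λ1 ≥ … ≥ λ_{2d}. Assume that for every unitary U on ℂ²⊗ℂ^d there exists a diagonal matrix D whose diagonal entries are a permutation of the eigenvalues of C (with multiplicity) such that λ(tr_1[UCU*]) ⊕ λ(tr_2[UCU*]) ≺ λ(tr_1[D]) ⊕ λ(tr_2[D]). If rank(C) > 3, then λ3 = λ4 = … = λ_{2d−1}, and moreover one of the following holds: (1) λ2 = λ3; (2) λ2 ≥ 2(d−2)λ3 + λ_{2d}; (3) d = 3 and λ_{2d} = 0. -/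

import Mathlib

open Matrix Finset Kronecker
open scoped ComplexOrder

/-- The first partial trace of a matrix on `ℂ^{d1} ⊗ ℂ^{d2}` (index pairs `(i,s)` ordered
lexicographically): `(tr_1 C)_{s,t} = ∑_i C_{(i,s),(i,t)}`. -/
noncomputable def ptrace1 {d1 d2 : ℕ} (C : Matrix (Fin d1 × Fin d2) (Fin d1 × Fin d2) ℂ) :
    Matrix (Fin d2) (Fin d2) ℂ :=
  Matrix.of fun s t => ∑ i : Fin d1, C (i, s) (i, t)

/-- The second partial trace: `(tr_2 C)_{i,j} = ∑_s C_{(i,s),(j,s)}`. -/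
noncomputable def ptrace2 {d1 d2 : ℕ} (C : Matrix (Fin d1 × Fin d2) (Fin d1 × Fin d2) ℂ) :
    Matrix (Fin d1) (Fin d1) ℂ :=
  Matrix.of fun i j => ∑ s : Fin d2, C (i, s) (j, s)

/-- The sum of the `k` largest entries of the vector `x` (the largest value of a sum of `k`
entries of `x`), i.e. `∑_{i=1}^k x_i^↓`. -/
noncomputable def maxSum {ι : Type*} [Fintype ι] (x : ι → ℝ) (k : ℕ) : ℝ :=
  sSup {s : ℝ | ∃ A : Finset ι, A.card = k ∧ s = ∑ i ∈ A, x i}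

/-- `x ≺ y` (majorization): for every `k`, the sum of the `k` largest entries of `x` is at
most the sum of the `k` largest entries of `y`, and the total sums are equal. -/
def Majorizes {ι κ : Type*} [Fintype ι] [Fintype κ] (x : ι → ℝ) (y : κ → ℝ) : Prop :=
  (∀ k : ℕ, maxSum x k ≤ maxSum y k) ∧ ∑ i, x i = ∑ j, y j

/-- `x ≺_w y` (weak majorization). -/
def WeakMajorizes {ι κ : Type*} [Fintype ι] [Fintype κ] (x : ι → ℝ) (y : κ → ℝ) : Prop :=
  ∀ k : ℕ, maxSum x k ≤ maxSum y k

/-!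
The unitaries `√(1 - θ) 1 + i √θ P`, where `P` exchanges two basis vectors that differ in both
tensor factors, move the diagonal matrix of an eigenvalue arrangement so that both partial traces
stay diagonal. Their joint spectrum runs along the segment between the line sums (row and column
sums) of the two `2 × d` arrangements that differ by the exchange, so every point of that segment
is majorized by the line sums of some arrangement.

Start from an arrangement with the two largest eigenvalues in one row and maximize its largest row
among the arrangements majorizing it: an exchange can no longer increase this row, so the row
dominates every cell of the other row outside the same column. The `d - 2` smallest line sums force
the four largest cells to fill two columns, and then every line contains a cell that is at least
`λ₃`. Comparing smallest line sums gives `λ₃ + λ_{2d} ≤ λ_{2d-1} + λ_{2d}`.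

When the middle of the list is constant, exchanging `λ₂` with a middle eigenvalue by a small amount
`u` asks for a line sum of at least `λ₁ + (d - 1) λ₃ + u`. If `λ₂ < 2(d - 2) λ₃ + λ_{2d}`, some `u`
rules out every line except a row containing both `λ₁` and `λ₂`, and then the `d - 1` smallest line
sums are too large.
-/

section Majorization

variable {ι κ : Type*}

theorem finite_setOf_sum_card_eq [Finite ι] (x : ι → ℝ) (k : ℕ) :
    {s : ℝ | ∃ A : Finset ι, A.card = k ∧ s = ∑ i ∈ A, x i}.Finite :=
  (Set.finite_range fun A : Finset ι ↦ ∑ i ∈ A, x i).subset fun _ ⟨A, _, hs⟩ ↦ ⟨A, hs.symm⟩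

variable [Fintype ι]

theorem sum_le_maxSum (x : ι → ℝ) (A : Finset ι) : ∑ i ∈ A, x i ≤ maxSum x A.card :=
  le_csSup (finite_setOf_sum_card_eq x _).bddAbove ⟨A, rfl, rfl⟩

theorem exists_sum_eq_maxSum (x : ι → ℝ) {k : ℕ} (hk : k ≤ Fintype.card ι) :
    ∃ A : Finset ι, A.card = k ∧ maxSum x k = ∑ i ∈ A, x i := by
  obtain ⟨A, -, hA⟩ := exists_subset_card_eq (s := (univ : Finset ι)) hk
  have hne : {s : ℝ | ∃ A : Finset ι, A.card = k ∧ s = ∑ i ∈ A, x i}.Nonempty := ⟨_, A, hA, rfl⟩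
  exact hne.csSup_mem (finite_setOf_sum_card_eq x k)

theorem maxSum_of_card_lt (x : ι → ℝ) {k : ℕ} (hk : Fintype.card ι < k) : maxSum x k = 0 := by
  have : {s : ℝ | ∃ A : Finset ι, A.card = k ∧ s = ∑ i ∈ A, x i} = ∅ :=
    Set.eq_empty_of_forall_notMem fun _ ⟨A, hA, _⟩ ↦ (A.card_le_univ.trans_lt hk).ne hA
  rw [maxSum, this, Real.sSup_empty]

theorem maxSum_comp_equiv [Fintype κ] (x : κ → ℝ) (e : ι ≃ κ) (k : ℕ) :
    maxSum (x ∘ e) k = maxSum x k := by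
  refine congrArg sSup (Set.ext fun s ↦ ⟨?_, ?_⟩)
  · rintro ⟨A, hA, rfl⟩
    exact ⟨A.map e.toEmbedding, by simpa using hA, by simp⟩
  · rintro ⟨A, hA, rfl⟩
    exact ⟨A.map e.symm.toEmbedding, by simpa using hA, by simp⟩

theorem majorizes_comp_equiv_iff {ι' κ' : Type*} [Fintype κ] [Fintype ι'] [Fintype κ']
    (x : ι' → ℝ) (y : κ' → ℝ) (e : ι ≃ ι') (f : κ ≃ κ') :
    Majorizes (x ∘ e) (y ∘ f) ↔ Majorizes x y := by
  simp only [Majorizes, maxSum_comp_equiv, Function.comp_apply, Equiv.sum_comp]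

theorem Majorizes.refl (x : ι → ℝ) : Majorizes x x :=
  ⟨fun _ ↦ le_rfl, rfl⟩

theorem Majorizes.trans {κ' : Type*} [Fintype κ] [Fintype κ'] {x : ι → ℝ} {y : κ → ℝ} {z : κ' → ℝ}
    (hxy : Majorizes x y) (hyz : Majorizes y z) : Majorizes x z :=
  ⟨fun k ↦ (hxy.1 k).trans (hyz.1 k), hxy.2.trans hyz.2⟩

theorem majorizes_iff {x y : ι → ℝ} :
    Majorizes x y ↔ (∀ A : Finset ι, ∑ i ∈ A, x i ≤ maxSum y A.card) ∧ ∑ i, x i = ∑ i, y i := by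
  refine and_congr_left fun _ ↦ ⟨fun h A ↦ (sum_le_maxSum x A).trans (h _), fun h k ↦ ?_⟩
  rcases le_or_gt k (Fintype.card ι) with hk | hk
  · obtain ⟨A, rfl, hA⟩ := exists_sum_eq_maxSum x hk
    exact hA.trans_le (h A)
  · rw [maxSum_of_card_lt x hk, maxSum_of_card_lt y hk]

theorem isClosed_setOf_majorizes (y : ι → ℝ) : IsClosed {x : ι → ℝ | Majorizes x y} := by
  simp only [majorizes_iff, Set.ofPred_and, Set.ofPred_forall]
  exact (isClosed_iInter fun A ↦ isClosed_le (by fun_prop) continuous_const).inter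
    (isClosed_eq (by fun_prop) continuous_const)

namespace Majorizes

variable {x y : ι → ℝ}

theorem exists_sum_le_sum (h : Majorizes x y) (A : Finset ι) :
    ∃ B : Finset ι, B.card = A.card ∧ ∑ i ∈ A, x i ≤ ∑ i ∈ B, y i := by
  obtain ⟨B, hB, hsum⟩ := exists_sum_eq_maxSum y A.card_le_univ
  exact ⟨B, hB, hsum ▸ (sum_le_maxSum x A).trans (h.1 _)⟩

theorem exists_sum_ge_sum (h : Majorizes x y) (A : Finset ι) :
    ∃ B : Finset ι, B.card = A.card ∧ ∑ i ∈ B, y i ≤ ∑ i ∈ A, x i := by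
  classical
  obtain ⟨B, hB, hsum⟩ := h.exists_sum_le_sum Aᶜ
  refine ⟨Bᶜ, ?_, ?_⟩
  · rw [card_compl, hB, card_compl, Nat.sub_sub_self A.card_le_univ]
  · linarith [sum_add_sum_compl A x, sum_add_sum_compl B y, h.2]

theorem exists_le (h : Majorizes x y) (a : ι) : ∃ b, x a ≤ y b := by
  obtain ⟨B, hB, hsum⟩ := h.exists_sum_le_sum {a}
  obtain ⟨b, rfl⟩ := card_eq_one.mp hB
  exact ⟨b, by simpa using hsum⟩

theorem exists_ge (h : Majorizes x y) (a : ι) : ∃ b, y b ≤ x a := by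
  obtain ⟨B, hB, hsum⟩ := h.exists_sum_ge_sum {a}
  obtain ⟨b, rfl⟩ := card_eq_one.mp hB
  exact ⟨b, by simpa using hsum⟩

end Majorizes

open Filter Topology in
theorem exists_majorizes_and_lt [Finite κ] {x x' : ι → ℝ} {y : κ → ι → ℝ}
    (h : ∀ θ ∈ Set.Icc (0 : ℝ) 1, ∃ k, Majorizes (AffineMap.lineMap x x' θ) (y k))
    {a : ι} (ha : x a < x' a) : ∃ k, Majorizes x (y k) ∧ ∃ b, x a < y k b := by
  have hev : ∀ᶠ θ in 𝓝[>] (0 : ℝ), ∃ k, Majorizes (AffineMap.lineMap x x' θ) (y k) ∧ 0 < θ := by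
    filter_upwards [Ioc_mem_nhdsGT one_pos] with θ hθ
    exact (h θ ⟨hθ.1.le, hθ.2⟩).imp fun k hk ↦ ⟨hk, hθ.1⟩
  obtain ⟨k, hk⟩ := frequently_exists.mp hev.frequently
  refine ⟨k, ?_, ?_⟩
  · have hlim : Tendsto (AffineMap.lineMap x x' : ℝ → ι → ℝ) (𝓝[>] 0) (𝓝 x) := by
      have := (AffineMap.lineMap_continuous (R := ℝ) (p := x) (q := x')).tendsto 0
      rw [AffineMap.lineMap_apply_zero] at this
      exact this.mono_left nhdsWithin_le_nhds
    exact (isClosed_setOf_majorizes (y k)).mem_of_frequently_of_tendsto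
      (hk.mono fun θ hθ ↦ hθ.1) hlim
  · obtain ⟨θ, hmaj, hθ⟩ := hk.exists
    obtain ⟨b, hb⟩ := hmaj.exists_le a
    refine ⟨b, lt_of_lt_of_le ?_ hb⟩
    simpa [AffineMap.lineMap_apply, hθ] using ha

end Majorization

section LineSum

variable {α β : Type*} [Fintype α] [Fintype β]

/-- The vector of all line sums of a rectangular array `E`: the column sums, indexed by
`Sum.inl`, followed by the row sums, indexed by `Sum.inr`. For a diagonal matrix with diagonal `E`
this is the joint spectrum of the two partial traces. -/
def lineSum (E : α × β → ℝ) : β ⊕ α → ℝ :=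
  Sum.elim (fun s ↦ ∑ i, E (i, s)) (fun i ↦ ∑ s, E (i, s))

@[simp]
theorem lineSum_inl (E : α × β → ℝ) (s : β) : lineSum E (.inl s) = ∑ i, E (i, s) := rfl

@[simp]
theorem lineSum_inr (E : α × β → ℝ) (i : α) : lineSum E (.inr i) = ∑ s, E (i, s) := rfl

theorem lineSum_lineMap (E F : α × β → ℝ) (θ : ℝ) :
    lineSum (AffineMap.lineMap E F θ) = AffineMap.lineMap (lineSum E) (lineSum F) θ := by
  ext (v | v) <;> simp [AffineMap.lineMap_apply_module, sum_add_distrib, mul_sum]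

theorem sum_lineSum (E : α × β → ℝ) (B : Finset (β ⊕ α)) :
    ∑ v ∈ B, lineSum E v = ∑ x ∈ univ ×ˢ B.toLeft, E x + ∑ x ∈ B.toRight ×ˢ univ, E x := by
  conv_lhs => rw [← toLeft_disjSum_toRight (u := B), sum_disjSum]
  rw [sum_product_right, sum_product]
  rfl

variable [DecidableEq α] [DecidableEq β]

theorem lineSum_comp_swap_inr (E : α × β → ℝ) {i j : α} (hij : i ≠ j) (s t : β) :
    lineSum (E ∘ Equiv.swap (i, s) (j, t)) (.inr i) =
      lineSum E (.inr i) + (E (j, t) - E (i, s)) := by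
  have hrest : ∀ r ∈ univ.erase s, (E ∘ Equiv.swap (i, s) (j, t)) (i, r) = E (i, r) := by
    intro r hr
    rw [Function.comp_apply, Equiv.swap_apply_of_ne_of_ne] <;> simp_all
  rw [lineSum_inr, lineSum_inr, ← add_sum_erase _ _ (mem_univ s), sum_congr rfl hrest,
    ← add_sum_erase univ (fun r ↦ E (i, r)) (mem_univ s)]
  simp only [Function.comp_apply, Equiv.swap_apply_left]
  ring

theorem lineSum_comp_swap_inl (E : α × β → ℝ) (i j : α) {s t : β} (hst : s ≠ t) :
    lineSum (E ∘ Equiv.swap (i, s) (j, t)) (.inl s) =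
      lineSum E (.inl s) + (E (j, t) - E (i, s)) := by
  have hrest : ∀ k ∈ univ.erase i, (E ∘ Equiv.swap (i, s) (j, t)) (k, s) = E (k, s) := by
    intro k hk
    rw [Function.comp_apply, Equiv.swap_apply_of_ne_of_ne] <;> simp_all
  rw [lineSum_inl, lineSum_inl, ← add_sum_erase _ _ (mem_univ i), sum_congr rfl hrest,
    ← add_sum_erase univ (fun k ↦ E (k, s)) (mem_univ i)]
  simp only [Function.comp_apply, Equiv.swap_apply_left]
  ring

theorem lineSum_comp_swap_inl_of_ne (E : α × β → ℝ) (i j : α) {r s t : β} (hrs : r ≠ s)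
    (hrt : r ≠ t) : lineSum (E ∘ Equiv.swap (i, s) (j, t)) (.inl r) = lineSum E (.inl r) := by
  refine sum_congr rfl fun k _ ↦ ?_
  rw [Function.comp_apply, Equiv.swap_apply_of_ne_of_ne] <;> simp [hrs, hrt]

theorem sum_lineSum_comp_swap_inl (E : α × β → ℝ) (i j : α) {s t : β} {S : Finset β} (hs : s ∈ S)
    (ht : t ∉ S) :
    ∑ r ∈ S, lineSum (E ∘ Equiv.swap (i, s) (j, t)) (.inl r) =
      ∑ r ∈ S, lineSum E (.inl r) + (E (j, t) - E (i, s)) := by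
  have hrest : ∀ r ∈ S.erase s,
      lineSum (E ∘ Equiv.swap (i, s) (j, t)) (.inl r) = lineSum E (.inl r) := fun r hr ↦
    lineSum_comp_swap_inl_of_ne E i j (ne_of_mem_erase hr)
      (ne_of_mem_of_not_mem (mem_of_mem_erase hr) ht)
  rw [← add_sum_erase _ _ hs, sum_congr rfl hrest,
    lineSum_comp_swap_inl E i j (ne_of_mem_of_not_mem hs ht),
    ← add_sum_erase S (fun r ↦ lineSum E (.inl r)) hs]
  ring

/-- The cells lying on at least one of the lines in `B`. -/
def cells (B : Finset (β ⊕ α)) : Finset (α × β) :=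
  univ ×ˢ B.toLeft ∪ B.toRight ×ˢ univ

@[simp]
theorem mem_cells {B : Finset (β ⊕ α)} {x : α × β} :
    x ∈ cells B ↔ .inl x.2 ∈ B ∨ .inr x.1 ∈ B := by
  simp [cells]

theorem card_cells_add (B : Finset (β ⊕ α)) :
    (cells B).card + (Fintype.card α - B.toRight.card) * (Fintype.card β - B.toLeft.card) =
      Fintype.card α * Fintype.card β := by
  have hcompl : (cells B)ᶜ = B.toRightᶜ ×ˢ B.toLeftᶜ := by
    ext; simp [and_comm]
  rw [← card_compl, ← card_compl, ← card_product, ← hcompl, card_add_card_compl,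
    Fintype.card_prod]

theorem sum_cells_le_sum_lineSum {E : α × β → ℝ} (hE : 0 ≤ E) (B : Finset (β ⊕ α)) :
    ∑ x ∈ cells B, E x ≤ ∑ v ∈ B, lineSum E v := by
  rw [sum_lineSum, ← sum_union_inter]
  exact le_add_of_nonneg_right (sum_nonneg fun x _ ↦ hE x)

end LineSum

section Spectrum

theorem exists_perm_comp_eq_of_map_eq {n γ : Type*} [Fintype n] {f h : n → γ}
    (H : univ.val.map f = univ.val.map h) : ∃ e : Equiv.Perm n, h ∘ e = f := by
  classical
  have hfiber (c : γ) : Nonempty ({a // f a = c} ≃ {a // h a = c}) := by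
    refine ⟨Fintype.equivOfCardEq ?_⟩
    have := congrArg (Multiset.count c) H
    rw [Multiset.count_map, Multiset.count_map] at this
    rw [Fintype.card_subtype, Fintype.card_subtype]
    simpa [card_def, filter_val, eq_comm] using this
  exact ⟨Equiv.ofFiberEquiv fun c ↦ (hfiber c).some, funext (Equiv.ofFiberEquiv_map _)⟩

variable {n 𝕜 : Type*} [Fintype n] [DecidableEq n] [RCLike 𝕜]

theorem exists_eigenvalues_eq_comp_of_eq_diagonal {A : Matrix n n 𝕜} (hA : A.IsHermitian)
    {f : n → ℝ} (h : A = diagonal fun x ↦ (f x : 𝕜)) :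
    ∃ e : Equiv.Perm n, hA.eigenvalues = f ∘ e := by
  obtain ⟨e, he⟩ : ∃ e : Equiv.Perm n, f ∘ e = hA.eigenvalues := by
    refine exists_perm_comp_eq_of_map_eq ?_
    have hroots : A.charpoly.roots = univ.val.map fun x ↦ (f x : 𝕜) := by
      rw [h, charpoly_diagonal, Polynomial.roots_prod _ _
        (prod_ne_zero_iff.mpr fun _ _ ↦ Polynomial.X_sub_C_ne_zero _)]
      simp
    have := congrArg (Multiset.map RCLike.re) (hA.roots_charpoly_eq_eigenvalues.symm.trans hroots)
    simpa [Function.comp_def] using this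
  exact ⟨e, he.symm⟩

theorem permMatrix_mul_diagonal_mul_conjTranspose (π : Equiv.Perm n) (f : n → 𝕜) :
    π.permMatrix 𝕜 * diagonal f * (π.permMatrix 𝕜)ᴴ = diagonal (f ∘ π) := by
  ext x y
  simp [conjTranspose_permMatrix, PEquiv.toMatrix_toPEquiv_mul, PEquiv.mul_toMatrix_toPEquiv,
    diagonal_apply, Equiv.Perm.inv_def]

theorem permMatrix_mem_unitaryGroup (π : Equiv.Perm n) :
    π.permMatrix 𝕜 ∈ unitaryGroup n 𝕜 := by
  rw [mem_unitaryGroup_iff, star_eq_conjTranspose, conjTranspose_permMatrix, ← permMatrix_mul]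
  simp

theorem exists_unitary_conj_eq_diagonal {A : Matrix n n 𝕜} (hA : A.IsHermitian)
    (π : Equiv.Perm n) :
    ∃ U ∈ unitaryGroup n 𝕜, U * A * Uᴴ = diagonal fun x ↦ (hA.eigenvalues (π x) : 𝕜) := by
  have hdiag : (hA.eigenvectorUnitary : Matrix n n 𝕜)ᴴ * A * hA.eigenvectorUnitary =
      diagonal fun x ↦ (hA.eigenvalues x : 𝕜) := by
    simpa [Unitary.conjStarAlgAut_apply] using! hA.conjStarAlgAut_star_eigenvectorUnitary
  refine ⟨π.permMatrix 𝕜 * (hA.eigenvectorUnitary : Matrix n n 𝕜)ᴴ,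
    mul_mem (permMatrix_mem_unitaryGroup π) (star hA.eigenvectorUnitary).2, ?_⟩
  calc _ = π.permMatrix 𝕜 * ((hA.eigenvectorUnitary : Matrix n n 𝕜)ᴴ * A *
        hA.eigenvectorUnitary) * (π.permMatrix 𝕜)ᴴ := by
        simp only [conjTranspose_mul, conjTranspose_conjTranspose, Matrix.mul_assoc]
    _ = _ := by rw [hdiag, permMatrix_mul_diagonal_mul_conjTranspose]; rfl

end Spectrum

section PartialSwap

variable {n : Type*} [Fintype n] [DecidableEq n]

/-- The matrix `√(1 - θ) 1 + i √θ P`, with `P` the permutation matrix of `τ`. For an involution `τ`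
these matrices form a path of unitaries from `1` to `i P`, along which the diagonal of
`W (diagonal E) Wᴴ` is the segment from `E` to `E ∘ τ`. -/
noncomputable def partialSwap (τ : Equiv.Perm n) (θ : ℝ) : Matrix n n ℂ :=
  (√(1 - θ) : ℂ) • 1 + (Complex.I * √θ) • τ.permMatrix ℂ

variable {τ : Equiv.Perm n} {θ : ℝ}

theorem partialSwap_mul_diagonal_mul_conjTranspose (hτ : τ⁻¹ = τ) (hθ : θ ∈ Set.Icc (0 : ℝ) 1)
    (E : n → ℝ) :
    partialSwap τ θ * diagonal (fun x ↦ (E x : ℂ)) * (partialSwap τ θ)ᴴ =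
      diagonal (fun x ↦ (AffineMap.lineMap E (E ∘ τ) θ x : ℂ)) +
        (Complex.I * √θ * √(1 - θ)) •
          of fun x y ↦ if τ x = y then (E y - E x : ℂ) else 0 := by
  have hc : (√(1 - θ) : ℂ) * √(1 - θ) = 1 - θ := by
    exact_mod_cast Real.mul_self_sqrt (sub_nonneg.mpr hθ.2)
  have hs : (√θ : ℂ) * √θ = θ := mod_cast Real.mul_self_sqrt hθ.1
  set P := τ.permMatrix ℂ with hP
  set D := diagonal fun x ↦ (E x : ℂ) with hD
  have hPH : Pᴴ = P := by rw [hP, conjTranspose_permMatrix, hτ]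
  have hPDP : P * D * P = diagonal fun x ↦ (E (τ x) : ℂ) := by
    conv_lhs => enter [2]; rw [← hPH]
    exact permMatrix_mul_diagonal_mul_conjTranspose τ _
  have hcomm : P * D - D * P = of fun x y ↦ if τ x = y then (E y - E x : ℂ) else 0 := by
    ext x y
    by_cases h : τ x = y <;> simp [hP, hD, h]
  have hsegment : diagonal (fun x ↦ (AffineMap.lineMap E (E ∘ τ) θ x : ℂ)) =
      (1 - θ : ℂ) • D + (θ : ℂ) • diagonal fun x ↦ (E (τ x) : ℂ) := by
    rw [hD, ← diagonal_smul, ← diagonal_smul, diagonal_add]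
    simp [AffineMap.lineMap_apply_module]
  rw [hsegment, ← hcomm, ← hPDP, ← hc, ← hs]
  simp only [partialSwap, ← hP, conjTranspose_add, conjTranspose_smul, conjTranspose_one, hPH]
  simp only [star_mul, Complex.star_def, Complex.conj_ofReal, Complex.conj_I, add_mul, mul_add,
    smul_mul_assoc, mul_smul_comm, one_mul, mul_one]
  match_scalars
  iterate 3 ring
  linear_combination -(√θ : ℂ) * √θ * Complex.I_sq

theorem partialSwap_mem_unitaryGroup (hτ : τ⁻¹ = τ) (hθ : θ ∈ Set.Icc (0 : ℝ) 1) :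
    partialSwap τ θ ∈ unitaryGroup n ℂ := by
  rw [mem_unitaryGroup_iff, star_eq_conjTranspose]
  have h := partialSwap_mul_diagonal_mul_conjTranspose hτ hθ (fun _ ↦ 1)
  ext x y
  simpa [AffineMap.lineMap_apply_module] using congrFun (congrFun h x) y

end PartialSwap

section Reduction

variable {d1 d2 : ℕ} {n : Type*}

/-- `M` has diagonal `E`, and all its other entries within a row or a column of the index
rectangle vanish. Both partial traces of such a matrix are diagonal. -/
structure IsLineDiagonal (M : Matrix (Fin d1 × Fin d2) (Fin d1 × Fin d2) ℂ)
    (E : Fin d1 × Fin d2 → ℝ) : Prop where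
  diag_eq : ∀ x, M x x = E x
  row_eq_zero : ∀ i {s t}, s ≠ t → M (i, s) (i, t) = 0
  col_eq_zero : ∀ s {i j}, i ≠ j → M (i, s) (j, s) = 0

namespace IsLineDiagonal

variable {M : Matrix (Fin d1 × Fin d2) (Fin d1 × Fin d2) ℂ} {E : Fin d1 × Fin d2 → ℝ}

theorem of_isDiag (hM : M.IsDiag) (hE : ∀ x, M x x = E x) : IsLineDiagonal M E :=
  ⟨hE, fun _ _ _ hst ↦ hM (by simpa using hst), fun _ _ _ hij ↦ hM (by simpa using hij)⟩

theorem ptrace1_eq_diagonal (h : IsLineDiagonal M E) :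
    ptrace1 M = diagonal fun s ↦ (lineSum E (.inl s) : ℂ) := by
  ext s t
  rcases eq_or_ne s t with rfl | hst
  · simp [ptrace1, h.diag_eq]
  · simp [ptrace1, hst, h.row_eq_zero _ hst]

theorem ptrace2_eq_diagonal (h : IsLineDiagonal M E) :
    ptrace2 M = diagonal fun i ↦ (lineSum E (.inr i) : ℂ) := by
  ext i j
  rcases eq_or_ne i j with rfl | hij
  · simp [ptrace2, h.diag_eq]
  · simp [ptrace2, hij, h.col_eq_zero _ hij]

theorem isHermitian_ptrace1 (h : IsLineDiagonal M E) : (ptrace1 M).IsHermitian := by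
  rw [h.ptrace1_eq_diagonal]
  exact isHermitian_diagonal_of_self_adjoint _ (by ext; simp)

theorem isHermitian_ptrace2 (h : IsLineDiagonal M E) : (ptrace2 M).IsHermitian := by
  rw [h.ptrace2_eq_diagonal]
  exact isHermitian_diagonal_of_self_adjoint _ (by ext; simp)

theorem exists_eigenvalues_ptrace_eq (h : IsLineDiagonal M E) :
    ∃ e : Equiv.Perm (Fin d2 ⊕ Fin d1),
      Sum.elim h.isHermitian_ptrace1.eigenvalues h.isHermitian_ptrace2.eigenvalues =
        lineSum E ∘ e := by
  obtain ⟨e₁, he₁⟩ := exists_eigenvalues_eq_comp_of_eq_diagonal h.isHermitian_ptrace1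
    h.ptrace1_eq_diagonal
  obtain ⟨e₂, he₂⟩ := exists_eigenvalues_eq_comp_of_eq_diagonal h.isHermitian_ptrace2
    h.ptrace2_eq_diagonal
  refine ⟨Equiv.sumCongr e₁ e₂, ?_⟩
  rw [he₁, he₂]
  ext (v | v) <;> rfl

end IsLineDiagonal

theorem isLineDiagonal_partialSwap_conj (E : Fin d1 × Fin d2 → ℝ) {i j : Fin d1} {s t : Fin d2}
    (hij : i ≠ j) (hst : s ≠ t) {θ : ℝ} (hθ : θ ∈ Set.Icc (0 : ℝ) 1) :
    IsLineDiagonal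
      (partialSwap (Equiv.swap (i, s) (j, t)) θ * diagonal (fun x ↦ (E x : ℂ)) *
        (partialSwap (Equiv.swap (i, s) (j, t)) θ)ᴴ)
      (AffineMap.lineMap E (E ∘ Equiv.swap (i, s) (j, t)) θ) := by
  rw [partialSwap_mul_diagonal_mul_conjTranspose (Equiv.swap_inv _ _) hθ]
  refine ⟨fun x ↦ ?_, fun k a b hab ↦ ?_, fun a k l hkl ↦ ?_⟩
  · by_cases hx : Equiv.swap (i, s) (j, t) x = x <;> simp [hx]
  · have hne : Equiv.swap (i, s) (j, t) (k, a) ≠ (k, b) := by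
      rw [Equiv.swap_apply_def]; split_ifs <;> grind
    simp [hab, hne]
  · have hne : Equiv.swap (i, s) (j, t) (k, a) ≠ (l, a) := by
      rw [Equiv.swap_apply_def]; split_ifs <;> grind
    simp [hkl, hne]

/-- Every matrix in the unitary orbit of `C` is dominated, with respect to the joint spectrum of
the two partial traces, by a diagonal matrix carrying the eigenvalues of `C`. -/
def OrbitMajorizedByDiagonal {C : Matrix (Fin d1 × Fin d2) (Fin d1 × Fin d2) ℂ}
    (hC : C.IsHermitian) : Prop :=
  ∀ U ∈ unitaryGroup (Fin d1 × Fin d2) ℂ,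
    ∃ D : Matrix (Fin d1 × Fin d2) (Fin d1 × Fin d2) ℂ, D.IsDiag ∧
      (∃ gp : Equiv.Perm (Fin d1 × Fin d2), ∀ p, D p p = (hC.eigenvalues (gp p) : ℂ)) ∧
      ∀ (hU1 : (ptrace1 (U * C * Uᴴ)).IsHermitian) (hU2 : (ptrace2 (U * C * Uᴴ)).IsHermitian)
        (hD1 : (ptrace1 D).IsHermitian) (hD2 : (ptrace2 D).IsHermitian),
        Majorizes (Sum.elim hU1.eigenvalues hU2.eigenvalues)
          (Sum.elim hD1.eigenvalues hD2.eigenvalues)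

/-- The trace that `OrbitMajorizedByDiagonal` leaves on the eigenvalue list `μ` alone: when two
entries in general position of an arrangement of `μ` in an `α × β` array are exchanged
continuously, the line sums stay majorized by those of some arrangement. -/
def SwapMajorized (α β : Type*) [Fintype α] [Fintype β] [DecidableEq α] [DecidableEq β]
    (μ : n → ℝ) : Prop :=
  ∀ (σ : α × β ≃ n) {i j : α} {s t : β}, i ≠ j → s ≠ t → ∀ θ ∈ Set.Icc (0 : ℝ) 1,
    ∃ σ' : α × β ≃ n, Majorizes
      (AffineMap.lineMap (lineSum (μ ∘ σ)) (lineSum (μ ∘ σ ∘ Equiv.swap (i, s) (j, t))) θ)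
      (lineSum (μ ∘ σ'))

theorem OrbitMajorizedByDiagonal.swapMajorized
    {C : Matrix (Fin d1 × Fin d2) (Fin d1 × Fin d2) ℂ} {hC : C.IsHermitian}
    (h : OrbitMajorizedByDiagonal hC) {μ : n → ℝ} (g : n ≃ Fin d1 × Fin d2)
    (hg : ∀ k, μ k = hC.eigenvalues (g k)) : SwapMajorized (Fin d1) (Fin d2) μ := by
  intro σ i j s t hij hst θ hθ
  set W := partialSwap (Equiv.swap (i, s) (j, t)) θ
  obtain ⟨V, hV, hVC⟩ := exists_unitary_conj_eq_diagonal hC (σ.trans g)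
  have hdiag : V * C * Vᴴ = diagonal fun x ↦ ((μ ∘ σ) x : ℂ) := by simpa [hg] using! hVC
  have hconj : W * V * C * (W * V)ᴴ = W * diagonal (fun x ↦ ((μ ∘ σ) x : ℂ)) * Wᴴ := by
    simp only [← hdiag, conjTranspose_mul, Matrix.mul_assoc]
  obtain ⟨D, hD, ⟨π, hπ⟩, hmaj⟩ := h (W * V)
    (mul_mem (partialSwap_mem_unitaryGroup (Equiv.swap_inv _ _) hθ) hV)
  rw [hconj] at hmaj
  have hM := isLineDiagonal_partialSwap_conj (μ ∘ σ) hij hst hθ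
  have hN : IsLineDiagonal D (μ ∘ π.trans g.symm) := .of_isDiag hD fun x ↦ by simp [hπ, hg]
  obtain ⟨e, he⟩ := hM.exists_eigenvalues_ptrace_eq
  obtain ⟨f, hf⟩ := hN.exists_eigenvalues_ptrace_eq
  refine ⟨π.trans g.symm, ?_⟩
  have := hmaj hM.isHermitian_ptrace1 hM.isHermitian_ptrace2 hN.isHermitian_ptrace1
    hN.isHermitian_ptrace2
  rwa [he, hf, majorizes_comp_equiv_iff, lineSum_lineMap] at this

end Reduction

section SortedSums

theorem sum_sub_le_sum_sub_of_le_of_ge {ι : Type*} {f : ι → ℝ} {c : ℝ} {T : Finset ι}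
    (hT : ∀ x ∈ T, f x ≤ c) (hTc : ∀ x ∉ T, c ≤ f x) (S : Finset ι) :
    ∑ x ∈ T, (f x - c) ≤ ∑ x ∈ S, (f x - c) := by
  classical
  have hTS : ∑ x ∈ T \ S, (f x - c) ≤ 0 :=
    sum_nonpos fun x hx ↦ sub_nonpos.mpr (hT x (mem_sdiff.mp hx).1)
  have hST : 0 ≤ ∑ x ∈ S \ T, (f x - c) :=
    sum_nonneg fun x hx ↦ sub_nonneg.mpr (hTc x (mem_sdiff.mp hx).2)
  linarith [sum_sdiff_sub_sum_sdiff (s₁ := S) (s₂ := T) (f := fun x ↦ f x - c)]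

theorem le_of_forall_sum_le_sum {ι : Type*} {f : ι → ℝ} {A : Finset ι}
    (hA : ∀ B : Finset ι, B.card = A.card → ∑ x ∈ A, f x ≤ ∑ x ∈ B, f x)
    {x y : ι} (hx : x ∈ A) (hy : y ∉ A) : f x ≤ f y := by
  classical
  have hy' : y ∉ A.erase x := fun h ↦ hy (mem_of_mem_erase h)
  have hcard : (insert y (A.erase x)).card = A.card := by
    rw [card_insert_of_notMem hy', card_erase_add_one hx]
  have := hA _ hcard
  rw [sum_insert hy', ← add_sum_erase A f hx] at this
  linarith

variable {α : Type*} {n : ℕ} {μ : Fin n → ℝ}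

theorem sum_Ici_le_sum_comp (hμ : Antitone μ) (σ : α ≃ Fin n) {k : Fin n} (hk : 0 ≤ μ k)
    {A : Finset α} (hA : n ≤ A.card + k) : ∑ l ∈ Ici k, μ l ≤ ∑ x ∈ A, μ (σ x) := by
  have h := sum_sub_le_sum_sub_of_le_of_ge (f := μ) (c := μ k) (T := Ici k)
    (fun l hl ↦ hμ (mem_Ici.mp hl)) (fun l hl ↦ hμ (not_le.mp (mem_Ici.not.mp hl)).le)
    (A.map σ.toEmbedding)
  simp only [sum_sub_distrib, sum_const, sum_map, card_map, Fin.card_Ici, nsmul_eq_mul,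
    Equiv.coe_toEmbedding] at h
  have hcard : ((n - k : ℕ) : ℝ) ≤ A.card := mod_cast by omega
  nlinarith

theorem exists_mem_apply_le_of_le_card_add (σ : α ≃ Fin n) {k : Fin n} {A : Finset α}
    (hA : n ≤ A.card + k) : ∃ x ∈ A, σ x ≤ k := by
  by_contra! h
  have hsub : A.map σ.toEmbedding ⊆ Ioi k := fun l hl ↦ by
    obtain ⟨x, hx, rfl⟩ := mem_map.mp hl
    exact mem_Ioi.mpr (h x hx)
  have := card_le_card hsub
  rw [card_map, Fin.card_Ioi] at this
  omega

theorem add_le_zero_add_one (hμ : Antitone μ) (hn : 1 < n) {k l : Fin n} (hkl : k ≠ l) :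
    μ k + μ l ≤ μ ⟨0, by omega⟩ + μ ⟨1, hn⟩ := by
  wlog h : k < l generalizing k l
  · rw [add_comm]
    exact this hkl.symm (lt_of_le_of_ne (not_lt.mp h) hkl.symm)
  · exact add_le_add (hμ (Nat.zero_le _)) (hμ (show 1 ≤ l.val by omega))

end SortedSums

section Pairing

variable {d : ℕ}

/-- The arrangement of a list in consecutive pairs, one pair in each column: the cell `(i, s)`
receives the index `i + 2 * s`. -/
def pairing (d : ℕ) : Fin 2 × Fin d ≃ Fin (2 * d) :=
  (Equiv.prodComm _ _).trans (finProdFinEquiv.trans (finCongr (mul_comm d 2)))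

@[simp]
theorem val_pairing (i : Fin 2) (s : Fin d) : (pairing d (i, s) : ℕ) = i + 2 * s := by
  simp [pairing]

theorem sum_lineSum_pairing_Ici (μ : Fin (2 * d) → ℝ) (r : Fin d) :
    ∑ s ∈ Ici r, lineSum (μ ∘ pairing d) (.inl s) = ∑ k ∈ Ici ⟨2 * r, by omega⟩, μ k := by
  have hIci : Ici (⟨2 * r, by omega⟩ : Fin (2 * d)) =
      (univ ×ˢ Ici r : Finset (Fin 2 × Fin d)).map (pairing d).toEmbedding := by
    ext k
    obtain ⟨⟨i, s⟩, rfl⟩ := (pairing d).surjective k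
    simp only [mem_Ici, mem_map_equiv, Equiv.symm_apply_apply, mem_product, mem_univ, true_and,
      Fin.le_def, val_pairing]
    omega
  rw [hIci, sum_map, sum_product_right]
  rfl

end Pairing

section SwapMajorized

variable {α β n : Type*} [Fintype α] [Fintype β] [DecidableEq α] [DecidableEq β] {μ : n → ℝ}

theorem SwapMajorized.exists_row_dominant (h : SwapMajorized α β μ) (σ₁ : α × β ≃ n) (i₁ : α)
    (hcol : ∀ (σ : α × β ≃ n) (s : β), lineSum (μ ∘ σ) (.inl s) ≤ lineSum (μ ∘ σ₁) (.inr i₁)) :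
    ∃ (σ : α × β ≃ n) (i : α), Majorizes (lineSum (μ ∘ σ₁)) (lineSum (μ ∘ σ)) ∧
      ∀ {j s t}, i ≠ j → s ≠ t → μ (σ (j, t)) ≤ μ (σ (i, s)) := by
  obtain ⟨⟨σ, i⟩, hσ, hmax⟩ := Set.exists_max_image
    {p : (α × β ≃ n) × α | Majorizes (lineSum (μ ∘ σ₁)) (lineSum (μ ∘ p.1))}
    (fun p ↦ lineSum (μ ∘ p.1) (.inr p.2)) (Set.toFinite _) ⟨(σ₁, i₁), Majorizes.refl _⟩
  refine ⟨σ, i, hσ, fun {j s t} hij hst ↦ ?_⟩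
  by_contra! hlt
  have hincr : lineSum (μ ∘ σ) (.inr i) <
      lineSum (μ ∘ σ ∘ Equiv.swap (i, s) (j, t)) (.inr i) := by
    rw [← Function.comp_assoc, lineSum_comp_swap_inr _ hij]
    simpa using hlt
  obtain ⟨σ', hσ', v, hv⟩ := exists_majorizes_and_lt (h σ hij hst) hincr
  have hσ₁σ' : Majorizes (lineSum (μ ∘ σ₁)) (lineSum (μ ∘ σ')) := Majorizes.trans hσ hσ'
  rcases v with r | k
  · exact (hv.trans_le (hcol σ' r)).not_ge (hmax (σ₁, i₁) (Majorizes.refl _))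
  · exact hv.not_ge (hmax (σ', k) hσ₁σ')

end SwapMajorized

section Middle

variable {d : ℕ} {μ : Fin (2 * d) → ℝ} {σ : Fin 2 × Fin d ≃ Fin (2 * d)}

theorem lineSum_inl_le (hd : 1 ≤ d) (hμ : Antitone μ) (σ : Fin 2 × Fin d ≃ Fin (2 * d))
    (s : Fin d) :
    lineSum (μ ∘ σ) (.inl s) ≤ μ ⟨0, by omega⟩ + μ ⟨1, by omega⟩ := by
  rw [lineSum_inl, Fin.sum_univ_two]
  exact add_le_zero_add_one hμ _ (σ.injective.ne (by simp))

theorem inr_notMem_of_sum_lineSum_le (hd : 3 ≤ d) (hμ : Antitone μ) (hpos : 0 ≤ μ)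
    (h3 : 0 < μ ⟨3, by omega⟩) {B : Finset (Fin d ⊕ Fin 2)} (hB : B.card = d - 2)
    (hsum : ∑ v ∈ B, lineSum (μ ∘ σ) v ≤ ∑ k ∈ Ici ⟨4, by omega⟩, μ k) (i : Fin 2) :
    .inr i ∉ B := by
  intro hi
  have hrow : 0 < B.toRight.card := card_pos.mpr ⟨i, mem_toRight.mpr hi⟩
  have hrow' : B.toRight.card ≤ 2 := card_finset_fin_le _
  have hcells : 2 * d ≤ (cells B).card + 3 := by
    have h₁ := card_cells_add B
    have h₂ := card_toLeft_add_card_toRight (u := B)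
    simp only [Fintype.card_fin] at h₁
    interval_cases B.toRight.card <;> omega
  have hIci : Ici (⟨3, by omega⟩ : Fin (2 * d)) = insert ⟨3, by omega⟩ (Ici ⟨4, by omega⟩) := by
    ext k
    simp only [mem_Ici, mem_insert, Fin.le_def, Fin.ext_iff]
    omega
  have := sum_Ici_le_sum_comp hμ σ h3.le hcells
  rw [hIci, sum_insert (by simp [Fin.le_def])] at this
  have : ∑ x ∈ cells B, μ (σ x) ≤ ∑ v ∈ B, lineSum (μ ∘ σ) v :=
    sum_cells_le_sum_lineSum (fun x ↦ hpos (σ x)) B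
  linarith

theorem le_of_sum_lineSum_le (hd : 3 ≤ d) (hμ : Antitone μ) (hpos : 0 ≤ μ)
    (h3 : 0 < μ ⟨3, by omega⟩) {B : Finset (Fin d ⊕ Fin 2)} (hB : B.card = d - 2)
    (hsum : ∑ v ∈ B, lineSum (μ ∘ σ) v ≤ ∑ k ∈ Ici ⟨4, by omega⟩, μ k)
    {x y : Fin 2 × Fin d} (hx : .inl x.2 ∈ B) (hy : .inl y.2 ∉ B) : μ (σ x) ≤ μ (σ y) := by
  have hrow := inr_notMem_of_sum_lineSum_le hd hμ hpos h3 hB hsum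
  have hcells : 2 * d ≤ (cells B).card + 4 := by
    have h₁ := card_cells_add B
    have h₂ := card_toLeft_add_card_toRight (u := B)
    have h₃ : B.toRight = ∅ := by ext i; simpa using hrow i
    simp only [Fintype.card_fin, h₃, card_empty] at h₁ h₂
    omega
  refine le_of_forall_sum_le_sum (f := fun x ↦ μ (σ x)) (A := cells B) (fun A hA ↦ ?_)
    (by simp [hx]) (by simp [hy, hrow])
  calc ∑ x ∈ cells B, μ (σ x) ≤ ∑ v ∈ B, lineSum (μ ∘ σ) v :=
        sum_cells_le_sum_lineSum (fun x ↦ hpos (σ x)) B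
    _ ≤ ∑ k ∈ Ici ⟨4, by omega⟩, μ k := hsum
    _ ≤ ∑ x ∈ A, μ (σ x) := sum_Ici_le_sum_comp hμ σ (hpos _) (by rw [hA]; exact hcells)

theorem third_le_of_row_dominant (hd : 3 ≤ d) (hμ : Antitone μ) {i j : Fin 2}
    (hdom : ∀ {s t}, s ≠ t → μ (σ (j, t)) ≤ μ (σ (i, s))) {L : Finset (Fin d)}
    (hL : L.card = d - 2)
    (hsep : ∀ {x y : Fin 2 × Fin d}, x.2 ∈ L → y.2 ∉ L → μ (σ x) ≤ μ (σ y))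
    {x : Fin 2 × Fin d} (hx : x.1 = i ∨ x.2 ∉ L) : μ ⟨2, by omega⟩ ≤ μ (σ x) := by
  obtain ⟨t₀, ht₀⟩ : L.Nonempty := card_pos.mp (by omega)
  have hcol {a : Fin d} (ha : a ∉ L) : μ ⟨2, by omega⟩ ≤ μ (σ (j, a)) := by
    have hcard : 2 * d ≤ (cells (L.disjSum {j})).card + 2 := by
      have := card_cells_add (L.disjSum {j})
      simp only [Fintype.card_fin, toLeft_disjSum, toRight_disjSum, card_singleton, hL] at this
      omega
    obtain ⟨⟨k, s⟩, hks, hle⟩ := exists_mem_apply_le_of_le_card_add σ (k := ⟨2, by omega⟩) hcard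
    refine (hμ hle).trans ?_
    by_cases hs : s ∈ L
    · exact hsep hs ha
    · obtain rfl : k = j := by simpa [hs] using hks
      exact (hdom (ne_of_mem_of_not_mem ht₀ hs)).trans (hsep ht₀ ha)
  obtain ⟨a, -, ha⟩ : ∃ a ∈ univ, a ∉ L :=
    exists_mem_notMem_of_card_lt_card (by rw [hL, card_fin]; omega)
  obtain ⟨k, s⟩ := x
  by_cases hs : s ∈ L
  · obtain rfl : k = i := hx.resolve_right (by simpa using hs)
    exact (hcol ha).trans (hdom (ne_of_mem_of_not_mem hs ha))
  · exact ((hcol ha).trans (hdom (ne_of_mem_of_not_mem ht₀ ha))).trans (hsep ht₀ hs)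

theorem third_add_last_le_lineSum (hd : 3 ≤ d) (hμ : Antitone μ) (hpos : 0 ≤ μ) {i : Fin 2}
    {L : Finset (Fin d)} (hL : L.card = d - 2)
    (hbig : ∀ x : Fin 2 × Fin d, x.1 = i ∨ x.2 ∉ L → μ ⟨2, by omega⟩ ≤ μ (σ x))
    (v : Fin d ⊕ Fin 2) :
    μ ⟨2, by omega⟩ + μ ⟨2 * d - 1, by omega⟩ ≤ lineSum (μ ∘ σ) v := by
  have hlast (k : Fin (2 * d)) : μ ⟨2 * d - 1, by omega⟩ ≤ μ k :=
    hμ (Fin.le_def.mpr (Nat.le_sub_one_of_lt k.isLt))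
  rcases v with s | k
  · obtain ⟨j, hj⟩ := exists_ne i
    exact (add_le_add (hbig (i, s) (.inl rfl)) (hlast (σ (j, s)))).trans
      (add_le_sum (f := fun k ↦ (μ ∘ σ) (k, s)) (fun k _ ↦ hpos (σ (k, s))) (mem_univ i)
        (mem_univ j) hj.symm)
  · obtain ⟨a, -, ha⟩ : ∃ a ∈ univ, a ∉ L :=
      exists_mem_notMem_of_card_lt_card (by rw [hL, card_fin]; omega)
    have : Nontrivial (Fin d) := Fin.nontrivial_iff_two_le.mpr (by omega)
    obtain ⟨b, hb⟩ := exists_ne a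
    exact (add_le_add (hbig (k, a) (.inr ha)) (hlast (σ (k, b)))).trans
      (add_le_sum (f := fun s ↦ (μ ∘ σ) (k, s)) (fun s _ ↦ hpos (σ (k, s))) (mem_univ a)
        (mem_univ b) hb.symm)

theorem exists_arrangement_zero_add_one_le_row (hd : 3 ≤ d) (hpos : 0 ≤ μ) :
    ∃ σ : Fin 2 × Fin d ≃ Fin (2 * d),
      μ ⟨0, by omega⟩ + μ ⟨1, by omega⟩ ≤ lineSum (μ ∘ σ) (.inr 0) ∧
      ∑ s ∈ Ici ⟨2, by omega⟩, lineSum (μ ∘ σ) (.inl s) = ∑ k ∈ Ici ⟨4, by omega⟩, μ k ∧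
      lineSum (μ ∘ σ) (.inl ⟨d - 1, by omega⟩) =
        μ ⟨2 * d - 2, by omega⟩ + μ ⟨2 * d - 1, by omega⟩ := by
  set τ : Equiv.Perm (Fin 2 × Fin d) := Equiv.swap (0, ⟨1, by omega⟩) (1, ⟨0, by omega⟩) with hτ
  have hcol {s : Fin d} (hs : 2 ≤ s.val) :
      lineSum (μ ∘ τ.trans (pairing d)) (.inl s) = lineSum (μ ∘ pairing d) (.inl s) := by
    rw [Equiv.coe_trans, ← Function.comp_assoc, hτ]
    exact lineSum_comp_swap_inl_of_ne _ _ _ (by grind) (by grind)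
  refine ⟨τ.trans (pairing d), ?_, ?_, ?_⟩
  · have h₀ : (τ.trans (pairing d)) (0, ⟨0, by omega⟩) = ⟨0, by omega⟩ := by
      rw [Equiv.trans_apply, hτ, Equiv.swap_apply_of_ne_of_ne (by simp) (by simp)]
      ext; simp
    have h₁ : (τ.trans (pairing d)) (0, ⟨1, by omega⟩) = ⟨1, by omega⟩ := by
      rw [Equiv.trans_apply, hτ, Equiv.swap_apply_left]
      ext; simp
    rw [← h₀, ← h₁]
    exact add_le_sum (f := fun s ↦ (μ ∘ τ.trans (pairing d)) (0, s)) (fun s _ ↦ hpos _)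
      (mem_univ _) (mem_univ _) (by simp)
  · rw [sum_congr rfl fun s hs ↦ hcol (Fin.le_def.mp (mem_Ici.mp hs)), sum_lineSum_pairing_Ici]
    rfl
  · rw [hcol (Nat.le_sub_of_add_le hd), lineSum_inl, Fin.sum_univ_two]
    congr 2 <;> refine congrArg μ (Fin.ext ?_) <;>
      simp only [val_pairing, Fin.val_zero, Fin.val_one] <;> omega

theorem SwapMajorized.third_le_penultimate (hd : 3 ≤ d) (h : SwapMajorized (Fin 2) (Fin d) μ)
    (hμ : Antitone μ) (hpos : 0 ≤ μ) (h3 : 0 < μ ⟨3, by omega⟩) :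
    μ ⟨2, by omega⟩ ≤ μ ⟨2 * d - 2, by omega⟩ := by
  obtain ⟨σ₁, hrow, htail, hlast⟩ := exists_arrangement_zero_add_one_le_row hd hpos
  obtain ⟨σ, i, hmaj, hdom⟩ := h.exists_row_dominant σ₁ 0
    fun σ s ↦ (lineSum_inl_le (by omega) hμ σ s).trans hrow
  obtain ⟨B, hB, hBsum⟩ := hmaj.exists_sum_ge_sum ((Ici ⟨2, by omega⟩).map .inl)
  rw [card_map, Fin.card_Ici] at hB
  replace hBsum : ∑ v ∈ B, lineSum (μ ∘ σ) v ≤ ∑ k ∈ Ici ⟨4, by omega⟩, μ k := by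
    simpa [← htail] using hBsum
  have hL : B.toLeft.card = d - 2 := by
    have hright : B.toRight = ∅ := by
      ext k
      simpa using inr_notMem_of_sum_lineSum_le hd hμ hpos h3 hB hBsum k
    simpa [hright, hB] using card_toLeft_add_card_toRight (u := B)
  obtain ⟨j, hj⟩ := exists_ne i
  have hbig (x : Fin 2 × Fin d) (hx : x.1 = i ∨ x.2 ∉ B.toLeft) :
      μ ⟨2, by omega⟩ ≤ μ (σ x) :=
    third_le_of_row_dominant hd hμ (fun hst ↦ hdom hj.symm hst) hL
      (fun hx hy ↦ le_of_sum_lineSum_le hd hμ hpos h3 hB hBsum (mem_toLeft.mp hx)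
        (mem_toLeft.not.mp hy)) hx
  obtain ⟨v, hv⟩ := hmaj.exists_ge (.inl ⟨d - 1, by omega⟩)
  linarith [third_add_last_le_lineSum hd hμ hpos hL hbig v]

end Middle

section FlatMiddle

/-- All entries of the list `μ` except the first two and the last one equal `m`; the list is meant
to be decreasing, and the entries are numbered from `0`. -/
def HasFlatMiddle {n : ℕ} (μ : Fin n → ℝ) (m : ℝ) : Prop :=
  ∀ k : Fin n, 2 ≤ k.val → k.val ≤ n - 2 → μ k = m

section ArbitraryLength

variable {α : Type*} {n : ℕ} {μ : Fin n → ℝ} {m : ℝ}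

theorem hasFlatMiddle_of_le (hn : 4 ≤ n) (hμ : Antitone μ)
    (h : μ ⟨2, by omega⟩ ≤ μ ⟨n - 2, by omega⟩) : HasFlatMiddle μ (μ ⟨2, by omega⟩) :=
  fun _ hk hk' ↦ (hμ (Fin.le_def.mpr hk)).antisymm (h.trans (hμ (Fin.le_def.mpr hk')))

theorem HasFlatMiddle.le_second (hn : 4 ≤ n) (hμ : Antitone μ) (hmid : HasFlatMiddle μ m) :
    m ≤ μ ⟨1, by omega⟩ :=
  (hmid ⟨2, by omega⟩ le_rfl (Nat.le_sub_of_add_le hn)).symm.trans_le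
    (hμ (Fin.le_def.mpr one_le_two))

theorem HasFlatMiddle.last_le (hn : 4 ≤ n) (hμ : Antitone μ) (hmid : HasFlatMiddle μ m) :
    μ ⟨n - 1, by omega⟩ ≤ m :=
  (hμ (Fin.mk_le_mk.mpr (by omega))).trans_eq
    (hmid ⟨2, by omega⟩ le_rfl (Nat.le_sub_of_add_le hn))

theorem HasFlatMiddle.sum_Ici_two (hn : 4 ≤ n) (hmid : HasFlatMiddle μ m) :
    ∑ k ∈ Ici ⟨2, by omega⟩, μ k = (n - 3) * m + μ ⟨n - 1, by omega⟩ := by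
  have hlast : (⟨n - 1, by omega⟩ : Fin n) ∈ Ici ⟨2, by omega⟩ :=
    mem_Ici.mpr (Fin.mk_le_mk.mpr (by omega))
  have hrest : ∀ k ∈ (Ici (⟨2, by omega⟩ : Fin n)).erase ⟨n - 1, by omega⟩, μ k = m := by
    intro k hk
    simp only [mem_erase, mem_Ici, Fin.le_def, ne_eq, Fin.ext_iff] at hk
    exact hmid k hk.2 (by omega)
  rw [← sum_erase_add _ _ hlast, sum_congr rfl hrest, sum_const, card_erase_of_mem hlast,
    Fin.card_Ici, nsmul_eq_mul, show n - 2 - 1 = n - 3 by omega, Nat.cast_sub (by omega),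
    Nat.cast_ofNat]

theorem HasFlatMiddle.sum_comp_eq [DecidableEq α] (hn : 3 ≤ n) (hmid : HasFlatMiddle μ m)
    (σ : α ≃ Fin n) (A : Finset α) :
    ∑ x ∈ A, μ (σ x) = A.card * m +
      (if σ.symm ⟨0, by omega⟩ ∈ A then μ ⟨0, by omega⟩ - m else 0) +
      (if σ.symm ⟨1, by omega⟩ ∈ A then μ ⟨1, by omega⟩ - m else 0) +
      (if σ.symm ⟨n - 1, by omega⟩ ∈ A then μ ⟨n - 1, by omega⟩ - m else 0) := by
  have hterm (x : α) : μ (σ x) = m +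
      (if σ.symm ⟨0, by omega⟩ = x then μ ⟨0, by omega⟩ - m else 0) +
      (if σ.symm ⟨1, by omega⟩ = x then μ ⟨1, by omega⟩ - m else 0) +
      (if σ.symm ⟨n - 1, by omega⟩ = x then μ ⟨n - 1, by omega⟩ - m else 0) := by
    obtain ⟨k, rfl⟩ := σ.symm.surjective x
    have := hmid k
    grind
  simp only [hterm, sum_add_distrib, sum_const, nsmul_eq_mul, sum_ite_eq]

theorem HasFlatMiddle.card_mul_add_le_sum_comp (hn : 4 ≤ n) (hμ : Antitone μ)
    (hmid : HasFlatMiddle μ m) (σ : α ≃ Fin n) (A : Finset α) :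
    A.card * m + (μ ⟨n - 1, by omega⟩ - m) ≤ ∑ x ∈ A, μ (σ x) := by
  classical
  have h₀₁ : μ ⟨1, by omega⟩ ≤ μ ⟨0, by omega⟩ := hμ (Fin.le_def.mpr zero_le_one)
  have h₁ := hmid.le_second hn hμ
  have hlast := hmid.last_le hn hμ
  rw [hmid.sum_comp_eq (by omega)]
  split_ifs <;> linarith

theorem HasFlatMiddle.card_mul_add_le_sum_comp_of_mem (hn : 4 ≤ n) (hμ : Antitone μ)
    (hmid : HasFlatMiddle μ m) {σ : α ≃ Fin n} {A : Finset α}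
    (hA : σ.symm ⟨0, by omega⟩ ∈ A ∨ σ.symm ⟨1, by omega⟩ ∈ A) :
    A.card * m + (μ ⟨1, by omega⟩ - m) + (μ ⟨n - 1, by omega⟩ - m) ≤ ∑ x ∈ A, μ (σ x) := by
  classical
  have h₀₁ : μ ⟨1, by omega⟩ ≤ μ ⟨0, by omega⟩ := hμ (Fin.le_def.mpr zero_le_one)
  have h₁ := hmid.le_second hn hμ
  have hlast := hmid.last_le hn hμ
  rw [hmid.sum_comp_eq (by omega)]
  split_ifs <;> first | linarith | tauto

end ArbitraryLength

variable {d : ℕ} {μ : Fin (2 * d) → ℝ} {σ : Fin 2 × Fin d ≃ Fin (2 * d)} {m : ℝ}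

theorem HasFlatMiddle.fst_eq_of_lt_lineSum (hd : 3 ≤ d) (hμ : Antitone μ)
    (hmid : HasFlatMiddle μ m) {i : Fin 2}
    (hi : μ ⟨0, by omega⟩ + (d - 1) * m < lineSum (μ ∘ σ) (.inr i)) :
    (σ.symm ⟨0, by omega⟩).1 = i ∧ (σ.symm ⟨1, by omega⟩).1 = i := by
  have h₀₁ : μ ⟨1, by omega⟩ ≤ μ ⟨0, by omega⟩ := hμ (Fin.le_def.mpr (by simp))
  have h₁ := hmid.le_second (by omega) hμ
  have hlast := hmid.last_le (by omega) hμ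
  rw [show lineSum (μ ∘ σ) (.inr i) = ∑ x ∈ {i} ×ˢ univ, (μ ∘ σ) x by simp] at hi
  simp only [Function.comp_apply, hmid.sum_comp_eq (by omega) σ, card_product,
    card_singleton, card_fin, one_mul, mem_product, mem_singleton, mem_univ, and_true] at hi
  by_contra hne
  split_ifs at hi with h h' h'' <;> first | exact hne ⟨h, h'⟩ | linarith

theorem card_toLeft_eq_of_notMem_cells {B : Finset (Fin d ⊕ Fin 2)} (hB : B.card = d - 1)
    {x y : Fin 2 × Fin d} (hxy : x ≠ y) (hrow : x.1 = y.1)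
    (hx : x ∉ cells B) (hy : y ∉ cells B) : B.toLeft.card = d - 2 ∧ B.toRight.card = 1 := by
  simp only [mem_cells, not_or] at hx hy
  have hleft : B.toLeft.card ≤ d - 2 := by
    have hsub : B.toLeft ⊆ {x.2, y.2}ᶜ := fun s hs ↦ by
      have := mem_toLeft.mp hs
      simp only [mem_compl, mem_insert, mem_singleton]
      rintro (rfl | rfl) <;> tauto
    refine (card_le_card hsub).trans_eq ?_
    rw [card_compl, card_pair fun h ↦ hxy (Prod.ext hrow h), Fintype.card_fin]
  have hright : B.toRight.card < 2 := by
    refine (card_lt_univ_of_notMem (x := x.1) ?_).trans_eq (Fintype.card_fin 2)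
    exact mem_toRight.not.mpr hx.2
  have := card_toLeft_add_card_toRight (u := B)
  have := x.2.isLt
  have := y.2.isLt
  have : x.2.val ≠ y.2.val := fun h ↦ hxy (Prod.ext hrow (Fin.ext h))
  omega

theorem HasFlatMiddle.add_min_le_sum_lineSum (hd : 3 ≤ d) (hμ : Antitone μ) (hpos : 0 ≤ μ)
    (hmid : HasFlatMiddle μ m) (hrow : (σ.symm ⟨0, by omega⟩).1 = (σ.symm ⟨1, by omega⟩).1)
    {B : Finset (Fin d ⊕ Fin 2)} (hB : B.card = d - 1) :
    (2 * d - 3) * m + μ ⟨2 * d - 1, by omega⟩ +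
        min (μ ⟨1, by omega⟩ - m) ((d - 3) * m + μ ⟨2 * d - 1, by omega⟩) ≤
      ∑ v ∈ B, lineSum (μ ∘ σ) v := by
  have hm : 0 ≤ m := (hpos _).trans (hmid.last_le (by omega) hμ)
  by_cases hmem : σ.symm ⟨0, by omega⟩ ∈ cells B ∨ σ.symm ⟨1, by omega⟩ ∈ cells B
  · have hcard : (2 * d - 2 : ℝ) ≤ (cells B).card := by
      have h₁ := card_cells_add B
      have h₂ := card_toLeft_add_card_toRight (u := B)
      have h₃ : B.toRight.card ≤ 2 := card_finset_fin_le _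
      simp only [Fintype.card_fin] at h₁
      have : 2 * d ≤ (cells B).card + 2 := by interval_cases B.toRight.card <;> omega
      rw [sub_le_iff_le_add]
      exact_mod_cast this
    have hsum := (hmid.card_mul_add_le_sum_comp_of_mem (by omega) hμ hmem).trans
      (sum_cells_le_sum_lineSum (E := μ ∘ σ) (fun x ↦ hpos (σ x)) B)
    linarith [mul_le_mul_of_nonneg_right hcard hm,
      min_le_left (μ ⟨1, by omega⟩ - m) ((d - 3) * m + μ ⟨2 * d - 1, by omega⟩)]
  · rw [not_or] at hmem
    obtain ⟨hleft, hright⟩ :=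
      card_toLeft_eq_of_notMem_cells hB (σ.symm.injective.ne (by simp)) hrow hmem.1 hmem.2
    have hcols := hmid.card_mul_add_le_sum_comp (by omega) hμ σ (univ ×ˢ B.toLeft)
    have hrows := hmid.card_mul_add_le_sum_comp (by omega) hμ σ (B.toRight ×ˢ univ)
    simp only [card_product, hleft, hright, card_fin, Nat.cast_mul, Nat.cast_ofNat, one_mul,
      Nat.cast_sub (show 2 ≤ d by omega)] at hcols hrows
    rw [sum_lineSum]
    simp only [Function.comp_apply]
    linarith [min_le_right (μ ⟨1, by omega⟩ - m) ((d - 3) * m + μ ⟨2 * d - 1, by omega⟩)]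

theorem HasFlatMiddle.lineSum_pairing_inr_zero (hd : 3 ≤ d) (hmid : HasFlatMiddle μ m) :
    lineSum (μ ∘ pairing d) (.inr 0) = μ ⟨0, by omega⟩ + (d - 1) * m := by
  have hrest : ∀ s ∈ univ.erase (⟨0, by omega⟩ : Fin d), (μ ∘ pairing d) (0, s) = m := by
    intro s hs
    have : s.val ≠ 0 := by simpa [Fin.ext_iff] using hs
    refine hmid _ ?_ ?_ <;> rw [val_pairing, Fin.val_zero] <;> omega
  have h₀ : pairing d (0, ⟨0, by omega⟩) = ⟨0, by omega⟩ := by ext; simp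
  rw [lineSum_inr, ← add_sum_erase _ _ (mem_univ ⟨0, by omega⟩), sum_congr rfl hrest]
  simp [h₀, Nat.cast_sub (show 1 ≤ d by omega)]

theorem SwapMajorized.exists_lineSum_ge_and_sum_lineSum_le (hd : 3 ≤ d)
    (h : SwapMajorized (Fin 2) (Fin d) μ) (hmid : HasFlatMiddle μ m) {u : ℝ} (hu : 0 < u)
    (hu' : u ≤ μ ⟨1, by omega⟩ - m) :
    ∃ σ : Fin 2 × Fin d ≃ Fin (2 * d),
      (∃ v, μ ⟨0, by omega⟩ + (d - 1) * m + u ≤ lineSum (μ ∘ σ) v) ∧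
      ∃ B : Finset (Fin d ⊕ Fin 2), B.card = d - 1 ∧
        ∑ v ∈ B, lineSum (μ ∘ σ) v ≤ (2 * d - 3) * m + μ ⟨2 * d - 1, by omega⟩ + u := by
  have hgap : 0 < μ ⟨1, by omega⟩ - m := hu.trans_le hu'
  have : NeZero d := ⟨by omega⟩
  set θ := u / (μ ⟨1, by omega⟩ - m)
  have hθu : θ * (μ ⟨1, by omega⟩ - m) = u := div_mul_cancel₀ u hgap.ne'
  obtain ⟨σ, hσ⟩ := h (pairing d) (i := 0) (j := 1) (s := ⟨1, by omega⟩) (t := ⟨0, by omega⟩)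
    (by simp) (by simp) θ ⟨by positivity, (div_le_one hgap).mpr hu'⟩
  have hb : (μ ∘ pairing d) (1, ⟨0, by omega⟩) = μ ⟨1, by omega⟩ :=
    congrArg μ (Fin.ext (by simp))
  have hm : (μ ∘ pairing d) (0, ⟨1, by omega⟩) = m := by
    refine hmid _ ?_ ?_ <;> simp only [val_pairing, Fin.val_zero] <;> omega
  rw [← Function.comp_assoc] at hσ
  refine ⟨σ, ?_, ?_⟩
  · obtain ⟨v, hv⟩ := hσ.exists_le (.inr 0)
    refine ⟨v, le_of_eq_of_le ?_ hv⟩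
    rw [AffineMap.lineMap_apply_module, Pi.add_apply, Pi.smul_apply, Pi.smul_apply,
      lineSum_comp_swap_inr _ (by simp), hmid.lineSum_pairing_inr_zero hd, hb, hm, ← hθu]
    simp only [smul_eq_mul]
    ring
  · obtain ⟨B, hB, hBsum⟩ := hσ.exists_sum_ge_sum ((Ici ⟨1, by omega⟩).map .inl)
    refine ⟨B, by simpa using hB, hBsum.trans_eq ?_⟩
    have hswap := sum_lineSum_comp_swap_inl (μ ∘ pairing d) 0 1 (s := ⟨1, by omega⟩)
      (t := ⟨0, by omega⟩) (S := Ici ⟨1, by omega⟩) (by simp) (by simp)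
    have hpair := (sum_lineSum_pairing_Ici μ ⟨1, by omega⟩).trans (hmid.sum_Ici_two (by omega))
    push_cast at hpair
    rw [hb, hm] at hswap
    simp only [sum_map, Function.Embedding.inl_apply, AffineMap.lineMap_apply_module, Pi.add_apply,
      Pi.smul_apply, smul_eq_mul, sum_add_distrib, ← mul_sum, hswap, hpair]
    linear_combination hθu

theorem SwapMajorized.two_mul_add_last_le_second (hd : 3 ≤ d) (h : SwapMajorized (Fin 2) (Fin d) μ)
    (hμ : Antitone μ) (hpos : 0 ≤ μ) (hmid : HasFlatMiddle μ m) (hgap : m < μ ⟨1, by omega⟩)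
    (hlast : 0 < (d - 3) * m + μ ⟨2 * d - 1, by omega⟩) :
    2 * (d - 2) * m + μ ⟨2 * d - 1, by omega⟩ ≤ μ ⟨1, by omega⟩ := by
  by_contra! hlt
  have hd' : (3 : ℝ) ≤ d := mod_cast hd
  have hm : 0 < m := by
    have := hpos ⟨2 * d - 1, by omega⟩
    have := hmid.last_le (by omega) hμ
    by_contra! hm
    linarith [mul_nonpos_of_nonneg_of_nonpos (sub_nonneg.mpr hd') hm]
  obtain ⟨u, hu, hu'⟩ : ∃ u, max 0 (μ ⟨1, by omega⟩ - (d - 1) * m) < u ∧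
      u < min (μ ⟨1, by omega⟩ - m) ((d - 3) * m + μ ⟨2 * d - 1, by omega⟩) := by
    refine exists_between (max_lt (lt_min ?_ ?_) (lt_min ?_ ?_)) <;> nlinarith
  rw [max_lt_iff] at hu
  obtain ⟨σ, ⟨v, hv⟩, B, hB, hBsum⟩ :=
    h.exists_lineSum_ge_and_sum_lineSum_le hd hmid hu.1 (hu'.le.trans (min_le_left _ _))
  obtain ⟨i, rfl⟩ : ∃ i, v = .inr i := by
    rcases v with s | i
    · linarith [lineSum_inl_le (by omega) hμ σ s]
    · exact ⟨i, rfl⟩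
  obtain ⟨h₀, h₁⟩ := hmid.fst_eq_of_lt_lineSum hd hμ (by linarith [hu.1])
  linarith [hmid.add_min_le_sum_lineSum hd hμ hpos (h₀.trans h₁.symm) hB]

end FlatMiddle

section Rank

variable {n 𝕜 : Type*} [Fintype n] [DecidableEq n] [RCLike 𝕜]

theorem eigenvalue_pos_of_lt_rank {C : Matrix n n 𝕜} (hC : C.PosSemidef) {N : ℕ} {μ : Fin N → ℝ}
    (hμ : Antitone μ) (g : Fin N ≃ n) (hg : ∀ k, μ k = hC.1.eigenvalues (g k)) {k : Fin N}
    (hk : k.val < C.rank) : 0 < μ k := by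
  have hpos (l : Fin N) : 0 ≤ μ l := (hC.eigenvalues_nonneg _).trans_eq (hg l).symm
  refine (hpos k).lt_of_ne' fun hzero ↦ hk.not_ge ?_
  rw [hC.1.rank_eq_card_non_zero_eigs, Fintype.card_subtype, ← Fin.card_Iio k,
    ← card_map g.toEmbedding]
  refine card_le_card fun x hx ↦ ?_
  obtain ⟨l, rfl⟩ := g.surjective x
  rw [mem_map_equiv, Equiv.symm_apply_apply, mem_Iio]
  by_contra! hkl
  exact (mem_filter.mp hx).2 ((hg l).symm.trans (((hμ hkl).trans_eq hzero).antisymm (hpos l)))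

end Rank

theorem necessary_conditions_qubit_qudit (d : ℕ) (hd : 3 ≤ d)
    (C : Matrix (Fin 2 × Fin d) (Fin 2 × Fin d) ℂ) (hC : C.PosSemidef)
    -- `μ` lists the eigenvalues of `C` in decreasing order
    (μ : Fin (2 * d) → ℝ) (hμ : Antitone μ)
    (g : Fin (2 * d) ≃ Fin 2 × Fin d) (hg : ∀ k, μ k = hC.1.eigenvalues (g k))
    -- majorization by a diagonal matrix holds over the whole unitary orbit
    (hmaj : ∀ U : Matrix (Fin 2 × Fin d) (Fin 2 × Fin d) ℂ,
      U ∈ Matrix.unitaryGroup (Fin 2 × Fin d) ℂ →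
      ∃ D : Matrix (Fin 2 × Fin d) (Fin 2 × Fin d) ℂ, D.IsDiag ∧
        (∃ gp : Equiv.Perm (Fin 2 × Fin d), ∀ p, D p p = (hC.1.eigenvalues (gp p) : ℂ)) ∧
        ∀ (hU1 : (ptrace1 (U * C * Uᴴ)).IsHermitian)
          (hU2 : (ptrace2 (U * C * Uᴴ)).IsHermitian)
          (hD1 : (ptrace1 D).IsHermitian) (hD2 : (ptrace2 D).IsHermitian),
          Majorizes (Sum.elim hU1.eigenvalues hU2.eigenvalues)
            (Sum.elim hD1.eigenvalues hD2.eigenvalues))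
    (hrank : 3 < C.rank) :
    (∀ i j : Fin (2 * d), 2 ≤ (i : ℕ) → (i : ℕ) ≤ 2 * d - 2 →
      2 ≤ (j : ℕ) → (j : ℕ) ≤ 2 * d - 2 → μ i = μ j) ∧
    (μ ⟨1, by omega⟩ = μ ⟨2, by omega⟩ ∨
      2 * ((d : ℝ) - 2) * μ ⟨2, by omega⟩ + μ ⟨2 * d - 1, by omega⟩ ≤ μ ⟨1, by omega⟩ ∨
      (d = 3 ∧ μ ⟨2 * d - 1, by omega⟩ = 0)) := by
  have hpos : 0 ≤ μ := fun k ↦ (hC.eigenvalues_nonneg _).trans_eq (hg k).symm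
  have h₃ : 0 < μ ⟨3, by omega⟩ := eigenvalue_pos_of_lt_rank hC hμ g hg hrank
  have hswap : SwapMajorized (Fin 2) (Fin d) μ :=
    OrbitMajorizedByDiagonal.swapMajorized (hC := hC.1) hmaj g hg
  have hmid : HasFlatMiddle μ (μ ⟨2, by omega⟩) :=
    hasFlatMiddle_of_le (by omega) hμ (hswap.third_le_penultimate hd hμ hpos h₃)
  refine ⟨fun i j hi hi' hj hj' ↦ (hmid i hi hi').trans (hmid j hj hj').symm, ?_⟩
  refine or_iff_not_imp_left.mpr fun h₁₂ ↦ or_iff_not_imp_right.mpr fun hdeg ↦ ?_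
  have hgap : μ ⟨2, by omega⟩ < μ ⟨1, by omega⟩ := (hmid.le_second (by omega) hμ).lt_of_ne' h₁₂
  refine hswap.two_mul_add_last_le_second hd hμ hpos hmid hgap ?_
  have h₂ : 0 < μ ⟨2, by omega⟩ := h₃.trans_le (hμ (Fin.le_def.mpr (by simp)))
  have hlast := hpos ⟨2 * d - 1, by omega⟩
  rcases hd.eq_or_lt with rfl | hd'
  · simpa using hlast.lt_of_ne' fun h ↦ hdeg ⟨rfl, h⟩
  · have : (0 : ℝ) < d - 3 := sub_pos.mpr (mod_cast hd')
    exact add_pos_of_pos_of_nonneg (mul_pos this h₂) hlast
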